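/- arXiv:0904.3503 — 5 statements merged into one kernel-verified Lean document; each statement's English description precedes it below -/
import Mathlib

section
/- Let T be a tree with positive integer weights and let x be a node minimizing |w(T_x) − w(T ∖ T_x)| with w(T_x) > w(T ∖ T_x). Then for every node v ∈ T_x ∖ {x} with w(T_x ∖ T_v) > 0, it holds that w(T_v) < w(T ∖ T_v) and w(T_v) ≤ w(T ∖ T_x). -/
/-!
Write `a = w(T_x)`, `c = w(T_v)` and `W = w(T)`. Since `T_v ⊆ T_x` and `T_x ∖ T_v` has positive
weight, `c < a`. Minimality at `x` gives `2a - W ≤ |2c - W|`. The case `2c ≥ W` would force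
`a ≤ c`, so `2c < W`, which is the first claim; then `2a - W ≤ W - 2c`, that is `c ≤ W - a`,
which is the second.
-/

open scoped Classical

/-- Ordered binary trees, every node carrying a label (assignment). `nil` is the empty tree. -/
inductive BT (α : Type) where
  | nil : BT α
  | node (a : α) (l r : BT α) : BT α
  deriving DecidableEq

namespace BT

variable {α : Type}

/-- Labels of the leaves (nodes with no children), from left to right. -/
def leafList : BT α → List α
  | .nil => []
  | .node a .nil .nil => [a]
  | .node _ l r => l.leafList ++ r.leafList

/-- Labels of all nodes. -/
def vals : BT α → List α
  | .nil => []
  | .node a l r => a :: (l.vals ++ r.vals)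

/-- Leaf labels together with the depth (number of edges from the root) of the leaf. -/
def leafDepths : BT α → List (α × ℕ)
  | .nil => []
  | .node a .nil .nil => [(a, 0)]
  | .node _ l r => (l.leafDepths ++ r.leafDepths).map (fun p => (p.1, p.2 + 1))

/-- Height of a binary tree, in edges. -/
def height : BT α → ℕ
  | .nil => 0
  | .node _ .nil .nil => 0
  | .node _ l r => max l.height r.height + 1

/-- Label of the root. -/
def rootVal : BT α → Option α
  | .nil => none
  | .node a _ _ => some a

/-- The labels of the nodes on the path from the root to the (leftmost) leaf labelled `x`. -/
def pathTo [DecidableEq α] : BT α → α → List α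
  | .nil, _ => []
  | .node a l r, x => a :: (if x ∈ r.leafList then r.pathTo x else l.pathTo x)

/-- The depth (number of edges) of the leaf labelled `x`. -/
def depthOf [DecidableEq α] (D : BT α) (x : α) : ℕ := (D.pathTo x).length - 1

/-- The search-tree property w.r.t. a descendance relation `desc` (`desc u v` meaning
`v` lies in the subtree of the input tree rooted at `u`): everything in the right subtree
of a node labelled `a` is in the subtree of `a`, everything in the left subtree is not. -/
def SearchProp (desc : α → α → Prop) : BT α → Prop
  | .nil => True
  | .node a l r =>
      (∀ b ∈ r.vals, desc a b) ∧ (∀ b ∈ l.vals, ¬ desc a b) ∧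
        SearchProp desc l ∧ SearchProp desc r

/-- Cost (expected number of queries, unnormalized) of a search tree. -/
def cost (w : α → ℕ) (D : BT α) : ℕ := (D.leafDepths.map (fun p => p.2 * w p.1)).sum

/-- Total weight of the leaves of a search (sub)tree. -/
def leafWeight (w : α → ℕ) (D : BT α) : ℕ := (D.leafList.map w).sum

/-- All subtrees of a binary tree together with their depth. -/
def subtreesD : BT α → List (BT α × ℕ)
  | .nil => []
  | .node a l r =>
      (BT.node a l r, 0) :: (l.subtreesD ++ r.subtreesD).map (fun p => (p.1, p.2 + 1))

end BT

/-- A finite rooted tree, encoded by a parent function on `Fin n`. -/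
structure RTree where
  n : ℕ
  parent : Fin n → Fin n
  root : Fin n
  parent_root : parent root = root
  reach : ∀ v, ∃ k, parent^[k] v = root

namespace RTree

variable (T : RTree)

/-- `T.anc u v` holds iff `u` is a (weak) ancestor of `v`, i.e. `v ∈ T_u`. -/
def anc (u v : Fin T.n) : Prop := ∃ k, T.parent^[k] v = u

/-- The set of nodes of the subtree `T_u` rooted at `u`. -/
noncomputable def subtree (u : Fin T.n) : Finset (Fin T.n) :=
  Finset.univ.filter (fun v => T.anc u v)

/-- Total weight of a set of nodes. -/
def wsum (w : Fin T.n → ℕ) (S : Finset (Fin T.n)) : ℕ := ∑ v ∈ S, w v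

/-- `D` is a search tree for the entire tree `T`. -/
def IsSearchTree (D : BT (Fin T.n)) : Prop :=
  (∀ v : Fin T.n, D.leafList.count v = 1) ∧ BT.SearchProp T.anc D

/-- `D` is a search tree for the subtree (or subforest) of `T` induced by the node set `V'`. -/
def IsSearchTreeOn (V' : Finset (Fin T.n)) (D : BT (Fin T.n)) : Prop :=
  (∀ v : Fin T.n, D.leafList.count v = (if v ∈ V' then 1 else 0)) ∧
    (∀ a ∈ D.vals, a ∈ V') ∧ BT.SearchProp T.anc D

/-- `D` is an optimal (minimum expected cost) search tree for `(T,w)`. -/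
def IsOptimal (w : Fin T.n → ℕ) (D : BT (Fin T.n)) : Prop :=
  T.IsSearchTree D ∧ ∀ D' : BT (Fin T.n), T.IsSearchTree D' → BT.cost w D ≤ BT.cost w D'

/-- Degree of a node of `T` (number of neighbours). -/
noncomputable def degree (v : Fin T.n) : ℕ :=
  (Finset.univ.filter (fun u => T.parent u = v ∧ u ≠ v)).card + (if v = T.root then 0 else 1)

/-- Maximum degree `Δ(T)`. -/
noncomputable def maxDegree : ℕ := Finset.univ.sup T.degree

/-- `y` lies on the (unique) path between `u` and `v` in `T`. -/
def onPath (y u v : Fin T.n) : Prop :=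
  (T.anc y u ∨ T.anc y v) ∧ (∀ z, T.anc z u → T.anc z v → T.anc z y)

end RTree


theorem RTree.subtree_subset (T : RTree) {x v : Fin T.n} (h : v ∈ T.subtree x) :
    T.subtree v ⊆ T.subtree x := by
  intro u hu
  simp only [RTree.subtree, Finset.mem_filter, Finset.mem_univ, true_and] at h hu ⊢
  obtain ⟨k, rfl⟩ := h
  obtain ⟨m, rfl⟩ := hu
  exact ⟨k + m, Function.iterate_add_apply _ _ _ _⟩

theorem RTree.wsum_sdiff_add (T : RTree) (w : Fin T.n → ℕ) {A B : Finset (Fin T.n)}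
    (h : A ⊆ B) : T.wsum w (B \ A) + T.wsum w A = T.wsum w B :=
  Finset.sum_sdiff h

/-- Let `T` be a tree with positive integer weights and `x` a node minimizing
`|w(T_x) − w(T ∖ T_x)|` with `w(T_x) > w(T ∖ T_x)`.  Then every node `v ∈ T_x ∖ {x}` with
`w(T_x ∖ T_v) > 0` satisfies `w(T_v) < w(T ∖ T_v)` and `w(T_v) ≤ w(T ∖ T_x)`. -/
theorem statement7 (T : RTree) (w : Fin T.n → ℕ) (hw : ∀ v, 0 < w v)
    (x : Fin T.n)
    (hmin : ∀ y : Fin T.n,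
      |(T.wsum w (T.subtree x) : ℤ) - (T.wsum w (Finset.univ \ T.subtree x) : ℤ)| ≤
      |(T.wsum w (T.subtree y) : ℤ) - (T.wsum w (Finset.univ \ T.subtree y) : ℤ)|)
    (hgt : T.wsum w (Finset.univ \ T.subtree x) < T.wsum w (T.subtree x)) :
    ∀ v ∈ T.subtree x, v ≠ x → 0 < T.wsum w (T.subtree x \ T.subtree v) →
      T.wsum w (T.subtree v) < T.wsum w (Finset.univ \ T.subtree v) ∧
      T.wsum w (T.subtree v) ≤ T.wsum w (Finset.univ \ T.subtree x) := by
  intro v hv _ hpos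
  have hx := T.wsum_sdiff_add w (Finset.subset_univ (T.subtree x))
  have hv' := T.wsum_sdiff_add w (Finset.subset_univ (T.subtree v))
  have hxv := T.wsum_sdiff_add w (T.subtree_subset hv)
  have hm := hmin v
  rw [abs_of_pos (by omega)] at hm
  rcases le_abs.mp hm with h | h <;> omega
end

section
/- In the Exact-3-Set-Cover reduction instance (T, w), for all indices 1 ≤ i' < i ≤ m the weights satisfy w(t_i) > w(a_{i1}) > w(t_{i'}) + w(u_{i'1}) + w(u_{i'2}) + w(u_{i'3}). -/
/-!
Write `z = x i 2` and `z' = x i' 2` for the largest elements of the two sets, so `z' ≤ z`.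

If `z' < z`, then `X_{i'} ≺ u_z`, so the whole of `w(X̃_{i'})` is one of the summands of `W_{u_z}`,
which is itself a summand of `w(a_i)`; all other contributions are nonnegative and
`γ(i,3) w(u_z)` is positive.

If `z' = z`, then `X_i` is counted in `γ(i,3)` but not in `γ(i',3)`, so `γ(i,3) ≥ γ(i',3) + 5`
(`gam_two_add_five_le`). Of the resulting surplus `5 w(u_z)`, only `(3/2) w(u_z)` is used by the
contribution of `u_z` to `w(t_{i'}) + w(X_{i'})`. What remains pays for the two smaller elements
`u_y` of `X_{i'}`: `W_{u_y} ≤ W_{u_z} ≤ w(u_z) / 6` by the definition of `w(u_z)`, and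
`(γ + 3/2) w(u_y) ≤ w(u_z) / 6` (`gam_mul_wu_le`).

For the last bound the instance does not force `n` to be at most a multiple of `m`, since
elements need not be covered, so `γ` is not bounded in terms of `|T|`. However `γ` exceeds its
`|T|`-bounded part by at most the distance `d = z - y`, while `w(u_z) ≥ (6|T|³)^d w(u_y)`, so the
exponential growth of the weights compensates.
-/

open scoped Classical

namespace X3C

/-- Strict lexicographic order on triples of naturals. -/
def keyLt (p q : ℕ × ℕ × ℕ) : Prop :=
  p.1 < q.1 ∨ (p.1 = q.1 ∧ (p.2.1 < q.2.1 ∨ (p.2.1 = q.2.1 ∧ p.2.2 < q.2.2)))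

/-- An instance of 3-bounded Exact 3-Set Cover, with the ground set `U = {0,…,n−1}`
(ordered naturally) and the sets `X_0 ≺ ⋯ ≺ X_{m−1}` already sorted according to the
order `≺`.  `x i 0 < x i 1 < x i 2` are the three elements of `X_i`. -/
structure Inst where
  n : ℕ
  m : ℕ
  k : ℕ
  hn : n = 3 * k
  hk : 1 ≤ k
  x : Fin m → Fin 3 → ℕ
  hord : ∀ i, x i 0 < x i 1 ∧ x i 1 < x i 2
  hbound : ∀ i, x i 2 < n
  hmult : ∀ u : ℕ, u < n →
    (Finset.univ.filter (fun i : Fin m => ∃ j : Fin 3, x i j = u)).card ≤ 3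
  hsorted : ∀ i j : Fin m, i < j →
    keyLt (x i 2, x i 1, x i 0) (x j 2, x j 1, x j 0)

/-- The key of the element `u_j`: the triple `(u_j, u_1, u_1)`, i.e. `(j, 0, 0)`. -/
def keyU (j : ℕ) : ℕ × ℕ × ℕ := (j, 0, 0)

namespace Inst

variable (I : Inst)

/-- The key of the set `X_i`: the triple `(x_3, x_2, x_1)` of its elements in decreasing
order; sets and elements are compared by the lexicographic order on their keys. -/
def keyX (i : Fin I.m) : ℕ × ℕ × ℕ := (I.x i 2, I.x i 1, I.x i 0)


/-- Number of elements `u_κ` with `u_{x i j} ≺ u_κ ≺ X_i`. -/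
noncomputable def elemsBetween (i : Fin I.m) (j : Fin 3) : ℕ :=
  (Finset.univ.filter
    (fun κ : Fin I.n => I.x i j < (κ : ℕ) ∧ keyLt (keyU κ) (I.keyX i))).card

/-- Number of sets `X_κ` with `u_{x i j} ≺ X_κ ⪯ X_i`. -/
noncomputable def setsBetween (i : Fin I.m) (j : Fin 3) : ℕ :=
  (Finset.univ.filter
    (fun κ : Fin I.m =>
      keyLt (keyU (I.x i j)) (I.keyX κ) ∧ ¬ keyLt (I.keyX i) (I.keyX κ))).card

/-- `γ(i,j) = j − 5 + |{u_κ : u_{ij} ≺ u_κ ≺ X_i}| + 5·|{X_κ : u_{ij} ≺ X_κ ⪯ X_i}|`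
(here `j ∈ {0,1,2}` encodes the index `j+1 ∈ {1,2,3}` of the paper). -/
noncomputable def gam (i : Fin I.m) (j : Fin 3) : ℤ :=
  ((j : ℤ) + 1) - 5 + (I.elemsBetween i j : ℤ) + 5 * (I.setsBetween i j : ℤ)

/-- `|T|`, the number of nodes of the reduction tree `T`
(one root, and for each set: `r_i`, `t_i`, three `s`-leaves and four `a`-leaves). -/
def Tsize : ℕ := 1 + 9 * I.m

/-- `W_{u_j}` as a function of a given weight assignment `f` on the elements:
`Σ_{ℓ : X_ℓ ≺ u_j} w(X̃_ℓ)`, where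
`w(X̃_ℓ) = w(t_ℓ) + w(u_{ℓ1}) + w(u_{ℓ2}) + w(u_{ℓ3}) + 4·w(a_{ℓ1})`,
`w(a_{ℓ1}) = W_{u_{ℓ1}} + W_{u_{ℓ2}} + W_{u_{ℓ3}} + Σ_κ γ(ℓ,κ)·w(u_{ℓκ})` and
`w(t_ℓ) = w(a_{ℓ1}) + w(X_ℓ)/2`. -/
noncomputable def WuF (f : ℕ → ℚ) : ℕ → ℚ := fun j =>
  Nat.strongRecOn j (fun j ih =>
    ∑ ℓ ∈ Finset.univ.filter (fun ℓ : Fin I.m => keyLt (I.keyX ℓ) (keyU j)),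
      (let Wparts : ℚ :=
        ∑ κ : Fin 3, (if h : I.x ℓ κ < j then ih (I.x ℓ κ) h else 0)
       let wa : ℚ := Wparts + ∑ κ : Fin 3, (I.gam ℓ κ : ℚ) * f (I.x ℓ κ)
       let wX : ℚ := f (I.x ℓ 0) + f (I.x ℓ 1) + f (I.x ℓ 2)
       (wa + wX / 2) + wX + 4 * wa))

/-- The weight `w(u_j)` of the element `u_j`, defined by processing `Π` in increasing
order: `w(u_1) = 1` and `w(u_j) = 1 + 6·max{|T|³·w(u_{j−1}), W_{u_j}}`. -/
noncomputable def wu : ℕ → ℚ := fun j =>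
  Nat.strongRecOn j (fun j ih =>
    if j = 0 then 1
    else
      let f : ℕ → ℚ := fun j' => if h : j' < j then ih j' h else 0
      1 + 6 * max ((I.Tsize : ℚ) ^ 3 * f (j - 1)) (I.WuF f j))

/-- `W_{u_j} = Σ_{ℓ : X_ℓ ≺ u_j} w(X̃_ℓ)`. -/
noncomputable def Wu (j : ℕ) : ℚ := I.WuF I.wu j

/-- The common weight `w(a_{i1}) = ⋯ = w(a_{i4})` of the `a`-leaves of `X̃_i`. -/
noncomputable def wa (i : Fin I.m) : ℚ :=
  I.Wu (I.x i 0) + I.Wu (I.x i 1) + I.Wu (I.x i 2) +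
    ∑ κ : Fin 3, (I.gam i κ : ℚ) * I.wu (I.x i κ)

/-- `w(X_i) = w(u_{i1}) + w(u_{i2}) + w(u_{i3})`. -/
noncomputable def wX (i : Fin I.m) : ℚ :=
  I.wu (I.x i 0) + I.wu (I.x i 1) + I.wu (I.x i 2)

/-- `w(t_i) = w(a_{i1}) + w(X_i)/2`. -/
noncomputable def wt (i : Fin I.m) : ℚ := I.wa i + I.wX i / 2

/-- `𝒴` (a set of indices of members of `𝒳`) is an exact cover of `U`. -/
def ExactCover (Y : Finset (Fin I.m)) : Prop :=
  ∀ j : Fin I.n, ∃! i : Fin I.m, i ∈ Y ∧ ∃ κ : Fin 3, I.x i κ = (j : ℕ)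

end Inst

end X3C

namespace X3C

namespace Inst

variable (I : Inst)

/-! ### The order between elements and sets -/

/-- `X_ℓ ≺ u_j` exactly when the largest element of `X_ℓ` lies before `u_j`. -/
lemma keyX_lt_keyU (ℓ : Fin I.m) (j : ℕ) : keyLt (I.keyX ℓ) (keyU j) ↔ I.x ℓ 2 < j := by
  simp [keyLt, keyX, keyU]

/-- `u_j ≺ X_ℓ` exactly when `u_j` is at most the largest element of `X_ℓ`. -/
lemma keyU_lt_keyX (ℓ : Fin I.m) (j : ℕ) : keyLt (keyU j) (I.keyX ℓ) ↔ j ≤ I.x ℓ 2 := by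
  have := I.hord ℓ
  simp only [keyLt, keyX, keyU]
  omega

lemma x_le (ℓ : Fin I.m) (κ : Fin 3) : I.x ℓ κ ≤ I.x ℓ 2 := by
  have := I.hord ℓ
  fin_cases κ <;> simp <;> omega

/-! ### Unfolding the recursive definition of the weights -/

lemma WuF_eq (f : ℕ → ℚ) (j : ℕ) :
    I.WuF f j = ∑ ℓ ∈ Finset.univ.filter (fun ℓ : Fin I.m => I.x ℓ 2 < j),
      (5 * (∑ κ : Fin 3, I.WuF f (I.x ℓ κ) + ∑ κ : Fin 3, (I.gam ℓ κ : ℚ) * f (I.x ℓ κ))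
        + 3 / 2 * (f (I.x ℓ 0) + f (I.x ℓ 1) + f (I.x ℓ 2))) := by
  have hfil : (Finset.univ.filter (fun ℓ : Fin I.m => keyLt (I.keyX ℓ) (keyU j)))
      = Finset.univ.filter (fun ℓ : Fin I.m => I.x ℓ 2 < j) :=
    Finset.filter_congr fun ℓ _ => I.keyX_lt_keyU ℓ j
  rw [← hfil]
  conv_lhs => rw [WuF, Nat.strongRecOn_eq]
  refine Finset.sum_congr rfl fun ℓ hℓ => ?_
  have hlt : I.x ℓ 2 < j := (I.keyX_lt_keyU ℓ j).1 (Finset.mem_filter.1 hℓ).2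
  have hκ : ∀ κ, I.x ℓ κ < j := fun κ => (I.x_le ℓ κ).trans_lt hlt
  simp only [hκ, dite_true]
  change _ + _ + _ + _ = _
  simp only [WuF]
  ring

/-- `WuF f j` depends only on the values of `f` below `j`, which is why the truncated recursion
defining `wu` computes the intended weights. -/
lemma WuF_congr (f g : ℕ → ℚ) (j : ℕ) (h : ∀ k < j, f k = g k) : I.WuF f j = I.WuF g j := by
  induction j using Nat.strong_induction_on with
  | _ j ih =>
    rw [WuF_eq, WuF_eq]
    refine Finset.sum_congr rfl fun ℓ hℓ => ?_
    have hlt : I.x ℓ 2 < j := (Finset.mem_filter.1 hℓ).2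
    have hκ : ∀ κ, I.x ℓ κ < j := fun κ => (I.x_le ℓ κ).trans_lt hlt
    have h1 : ∀ κ, f (I.x ℓ κ) = g (I.x ℓ κ) := fun κ => h _ (hκ κ)
    have h2 : ∀ κ, I.WuF f (I.x ℓ κ) = I.WuF g (I.x ℓ κ) := fun κ =>
      ih _ (hκ κ) fun k hk => h k (hk.trans (hκ κ))
    simp only [h1, h2]

lemma wu_zero : I.wu 0 = 1 := by
  rw [wu, Nat.strongRecOn_eq]
  simp

lemma wu_succ (j : ℕ) :
    I.wu (j + 1) = 1 + 6 * max ((I.Tsize : ℚ) ^ 3 * I.wu j) (I.Wu (j + 1)) := by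
  conv_lhs => rw [wu, Nat.strongRecOn_eq]
  rw [if_neg (Nat.succ_ne_zero j)]
  have h : I.WuF (fun j' => if _h : j' < j + 1 then I.wu j' else 0) (j + 1) = I.Wu (j + 1) :=
    I.WuF_congr _ _ _ fun k hk => by simp [hk]
  rw [← h]
  simp [wu]

/-! ### Positivity and monotonicity -/

lemma wu_pos (j : ℕ) : 0 < I.wu j := by
  induction j with
  | zero => simp [wu_zero]
  | succ j ih =>
    rw [wu_succ]
    have : (0 : ℚ) ≤ (I.Tsize : ℚ) ^ 3 * I.wu j := by positivity
    have := this.trans (le_max_left _ (I.Wu (j + 1)))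
    linarith

lemma wX_pos (i : Fin I.m) : 0 < I.wX i := by
  have := I.wu_pos (I.x i 0)
  have := I.wu_pos (I.x i 1)
  have := I.wu_pos (I.x i 2)
  unfold wX
  linarith

/-- `X_i` itself is counted by `setsBetween`. -/
lemma one_le_setsBetween (i : Fin I.m) (j : Fin 3) : 1 ≤ I.setsBetween i j := by
  refine Finset.card_pos.2 ⟨i, ?_⟩
  simp only [Finset.mem_filter, Finset.mem_univ, true_and]
  exact ⟨(I.keyU_lt_keyX _ _).2 (I.x_le i j), by simp [keyLt]⟩

lemma gam_pos (i : Fin I.m) (j : Fin 3) : 0 < I.gam i j := by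
  have := I.one_le_setsBetween i j
  unfold gam
  omega

lemma gam_mul_wu_pos (i : Fin I.m) (j : Fin 3) : 0 < (I.gam i j : ℚ) * I.wu (I.x i j) :=
  mul_pos (by exact_mod_cast I.gam_pos i j) (I.wu_pos _)

lemma wa_eq (i : Fin I.m) :
    I.wa i = ∑ κ : Fin 3, I.Wu (I.x i κ) + ∑ κ : Fin 3, (I.gam i κ : ℚ) * I.wu (I.x i κ) := by
  rw [wa, Fin.sum_univ_three (f := fun κ => I.Wu (I.x i κ))]

/-- `W_{u_j}` is the total weight of the sets `X̃_ℓ` with `X_ℓ ≺ u_j`. -/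
lemma Wu_eq (j : ℕ) :
    I.Wu j = ∑ ℓ ∈ Finset.univ.filter (fun ℓ : Fin I.m => I.x ℓ 2 < j),
      (5 * I.wa ℓ + 3 / 2 * I.wX ℓ) := by
  rw [Wu, WuF_eq]
  refine Finset.sum_congr rfl fun ℓ _ => ?_
  rw [wa_eq]
  rfl

lemma Wu_nonneg (j : ℕ) : 0 ≤ I.Wu j := by
  induction j using Nat.strong_induction_on with
  | _ j ih =>
    rw [Wu_eq]
    refine Finset.sum_nonneg fun ℓ hℓ => ?_
    have hlt : I.x ℓ 2 < j := (Finset.mem_filter.1 hℓ).2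
    have h1 : 0 ≤ ∑ κ : Fin 3, I.Wu (I.x ℓ κ) :=
      Finset.sum_nonneg fun κ _ => ih _ ((I.x_le ℓ κ).trans_lt hlt)
    have h2 : 0 ≤ ∑ κ : Fin 3, (I.gam ℓ κ : ℚ) * I.wu (I.x ℓ κ) :=
      Finset.sum_nonneg fun κ _ => (I.gam_mul_wu_pos ℓ κ).le
    have h3 := I.wX_pos ℓ
    rw [wa_eq]
    linarith

lemma wa_nonneg (i : Fin I.m) : 0 ≤ I.wa i := by
  rw [wa_eq]
  exact add_nonneg (Finset.sum_nonneg fun κ _ => I.Wu_nonneg _)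
    (Finset.sum_nonneg fun κ _ => (I.gam_mul_wu_pos i κ).le)

lemma wtilde_nonneg (ℓ : Fin I.m) : 0 ≤ 5 * I.wa ℓ + 3 / 2 * I.wX ℓ := by
  have := I.wa_nonneg ℓ
  have := I.wX_pos ℓ
  linarith

lemma Wu_mono {j k : ℕ} (h : j ≤ k) : I.Wu j ≤ I.Wu k := by
  rw [Wu_eq, Wu_eq]
  refine Finset.sum_le_sum_of_subset_of_nonneg ?_ fun ℓ _ _ => I.wtilde_nonneg ℓ
  exact Finset.monotone_filter_right _ fun ℓ _ hℓ => lt_of_lt_of_le hℓ h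

/-! ### Growth of the element weights and bounds on the coefficients -/

lemma six_Wu_lt_wu {z : ℕ} (hz : 0 < z) : 6 * I.Wu z < I.wu z := by
  obtain ⟨j, rfl⟩ := Nat.exists_eq_succ_of_ne_zero hz.ne'
  rw [Nat.succ_eq_add_one, wu_succ]
  have := le_max_right ((I.Tsize : ℚ) ^ 3 * I.wu j) (I.Wu (j + 1))
  linarith

/-- Iterating `w(u_{j+1}) ≥ 6|T|³ w(u_j)`; the exponential factor is kept only as
`d · 6|T|³`. -/
lemma wu_growth (y d : ℕ) :
    ((d : ℚ) + 1) * (6 * (I.Tsize : ℚ) ^ 3) * I.wu y ≤ I.wu (y + d + 1) := by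
  have hT : (1 : ℚ) ≤ (I.Tsize : ℚ) ^ 3 := by
    have : (1 : ℚ) ≤ I.Tsize := by simp [Tsize]
    exact one_le_pow₀ this
  have hstep : ∀ j, 6 * (I.Tsize : ℚ) ^ 3 * I.wu j ≤ I.wu (j + 1) := fun j => by
    rw [wu_succ]
    have := le_max_left ((I.Tsize : ℚ) ^ 3 * I.wu j) (I.Wu (j + 1))
    linarith
  induction d with
  | zero => simpa using hstep y
  | succ d ih =>
    have h1 := hstep (y + d + 1)
    have h2 := I.wu_pos (y + d + 1)
    have h3 : 6 * I.wu (y + d + 1) ≤ 6 * (I.Tsize : ℚ) ^ 3 * I.wu (y + d + 1) := by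
      nlinarith
    have h5 : 0 ≤ 6 * (I.Tsize : ℚ) ^ 3 * I.wu y := by
      have := I.wu_pos y
      positivity
    have h6 : 0 ≤ (d : ℚ) * (6 * (I.Tsize : ℚ) ^ 3 * I.wu y) := by positivity
    have h7 : y + (d + 1) + 1 = y + d + 1 + 1 := by ring
    rw [h7]
    push_cast
    nlinarith

lemma elemsBetween_le (i : Fin I.m) (j : Fin 3) :
    I.elemsBetween i j ≤ I.x i 2 - I.x i j := by
  unfold elemsBetween
  rw [← Nat.card_Ioc]
  refine Finset.card_le_card_of_injOn (fun κ : Fin I.n => (κ : ℕ)) ?_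
    (fun a _ b _ hab => Fin.ext hab)
  intro κ hκ
  have hκ := (Finset.mem_filter.1 (Finset.mem_coe.1 hκ)).2
  exact Finset.mem_coe.2 (Finset.mem_Ioc.2 ⟨hκ.1, (I.keyU_lt_keyX i κ).1 hκ.2⟩)

lemma setsBetween_le (i : Fin I.m) (j : Fin 3) : I.setsBetween i j ≤ I.m :=
  (Finset.card_filter_le _ _).trans (by simp)

/-- The contribution of a non-maximal element of `X_i` to `w(t_i) + w(X_i)`, apart from its `W`,
is at most a sixth of the weight of the maximal element. -/
lemma gam_mul_wu_le (i : Fin I.m) (j : Fin 3) (hj : (j : ℕ) ≤ 1) (hlt : I.x i j < I.x i 2) :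
    ((I.gam i j : ℚ) + 3 / 2) * I.wu (I.x i j) ≤ I.wu (I.x i 2) / 6 := by
  obtain ⟨d, hd⟩ : ∃ d, I.x i 2 = I.x i j + d + 1 := ⟨I.x i 2 - I.x i j - 1, by omega⟩
  have he := I.elemsBetween_le i j
  have hs := I.setsBetween_le i j
  have hg : I.gam i j + 2 ≤ (d : ℤ) + 5 * I.m := by
    unfold gam
    omega
  have hgQ : (I.gam i j : ℚ) + 2 ≤ (d : ℚ) + 5 * I.m := by exact_mod_cast hg
  have hT : (I.Tsize : ℚ) = 1 + 9 * I.m := by simp [Tsize]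
  have hm : (0 : ℚ) ≤ I.m := by positivity
  have hd0 : (0 : ℚ) ≤ d := by positivity
  have hT1 : (1 : ℚ) ≤ I.Tsize := by linarith
  have hT3 : (I.Tsize : ℚ) ≤ (I.Tsize : ℚ) ^ 3 := le_self_pow₀ hT1 (by norm_num)
  have hγ : (I.gam i j : ℚ) + 3 / 2 ≤ ((d : ℚ) + 1) * (I.Tsize : ℚ) ^ 3 := by
    have h1 : ((d : ℚ) + 1) * I.Tsize ≤ ((d : ℚ) + 1) * (I.Tsize : ℚ) ^ 3 := by gcongr
    have h2 : (0 : ℚ) ≤ d * I.m := by positivity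
    rw [hT] at h1
    rw [hT]
    nlinarith
  have hgr := I.wu_growth (I.x i j) d
  rw [← hd] at hgr
  have := mul_le_mul_of_nonneg_right hγ (I.wu_pos (I.x i j)).le
  linarith

/-- For two sets with the same largest element, everything counted in `γ(i',3)` is counted in
`γ(i,3)`, which in addition counts `X_i`. -/
lemma gam_two_add_five_le {i' i : Fin I.m} (h : i' < i) (hz : I.x i' 2 = I.x i 2) :
    I.gam i' 2 + 5 ≤ I.gam i 2 := by
  have hlt : keyLt (I.keyX i') (I.keyX i) := I.hsorted i' i h
  have hsets : I.setsBetween i' 2 < I.setsBetween i 2 := by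
    refine Finset.card_lt_card (Finset.ssubset_iff_of_subset ?_ |>.2 ⟨i, ?_, ?_⟩)
    · intro κ hκ
      have hκ := (Finset.mem_filter.1 hκ).2
      refine Finset.mem_filter.2 ⟨Finset.mem_univ _, hz ▸ hκ.1, fun hc => hκ.2 ?_⟩
      simp only [keyLt] at hc hlt ⊢
      omega
    · refine Finset.mem_filter.2 ⟨Finset.mem_univ _, (I.keyU_lt_keyX _ _).2 le_rfl, ?_⟩
      simp [keyLt]
    · exact fun hc => (Finset.mem_filter.1 hc).2.2 hlt
  have he : I.elemsBetween i' 2 = 0 := by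
    have := I.elemsBetween_le i' 2
    omega
  unfold gam
  omega

end Inst

end X3C

/-! ### Comparison of the weights of two sets -/

/-- In the X3C reduction instance `(T,w)`, for all `i' < i` one has
`w(t_i) > w(a_{i1}) > w(t_{i'}) + w(u_{i'1}) + w(u_{i'2}) + w(u_{i'3})`. -/
theorem statement8 (I : X3C.Inst) (i i' : Fin I.m) (h : i' < i) :
    I.wa i < I.wt i ∧
      I.wt i' + I.wu (I.x i' 0) + I.wu (I.x i' 1) + I.wu (I.x i' 2) < I.wa i := by
  refine ⟨?_, ?_⟩
  · have := I.wX_pos i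
    unfold X3C.Inst.wt
    linarith
  have hW0 := I.Wu_nonneg (I.x i 0)
  have hW1 := I.Wu_nonneg (I.x i 1)
  have hg0 := I.gam_mul_wu_pos i 0
  have hg1 := I.gam_mul_wu_pos i 1
  have hg2 := I.gam_mul_wu_pos i 2
  have hle : I.x i' 2 ≤ I.x i 2 := by
    have := I.hsorted i' i h
    simp only [X3C.keyLt] at this
    omega
  have hwa : I.wa i = I.Wu (I.x i 0) + I.Wu (I.x i 1) + I.Wu (I.x i 2) +
      ((I.gam i 0 : ℚ) * I.wu (I.x i 0) + (I.gam i 1 : ℚ) * I.wu (I.x i 1) +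
        (I.gam i 2 : ℚ) * I.wu (I.x i 2)) := by
    rw [X3C.Inst.wa, Fin.sum_univ_three]
  rcases hle.lt_or_eq with hlt | hz
  · have hmem : 5 * I.wa i' + 3 / 2 * I.wX i' ≤ I.Wu (I.x i 2) := by
      rw [I.Wu_eq]
      exact Finset.single_le_sum (f := fun ℓ => 5 * I.wa ℓ + 3 / 2 * I.wX ℓ)
        (fun ℓ _ => I.wtilde_nonneg ℓ)
        (Finset.mem_filter.2 ⟨Finset.mem_univ i', hlt⟩)
    have hwa' := I.wa_nonneg i'
    unfold X3C.Inst.wt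
    unfold X3C.Inst.wX at *
    linarith
  · obtain ⟨h01, h12⟩ := I.hord i'
    have hwa' : I.wa i' = I.Wu (I.x i' 0) + I.Wu (I.x i' 1) + I.Wu (I.x i' 2) +
        ((I.gam i' 0 : ℚ) * I.wu (I.x i' 0) + (I.gam i' 1 : ℚ) * I.wu (I.x i' 1) +
          (I.gam i' 2 : ℚ) * I.wu (I.x i' 2)) := by
      rw [X3C.Inst.wa, Fin.sum_univ_three]
    have hb0 := I.gam_mul_wu_le i' 0 (by simp) (h01.trans h12)
    have hb1 := I.gam_mul_wu_le i' 1 (by simp) h12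
    have hm0 := I.Wu_mono (h01.trans h12).le
    have hm1 := I.Wu_mono h12.le
    have hW := I.six_Wu_lt_wu (z := I.x i' 2) (by omega)
    have hpos := I.wu_pos (I.x i' 2)
    have hγ : (I.gam i' 2 : ℚ) + 5 ≤ I.gam i 2 := by
      exact_mod_cast I.gam_two_add_five_le h hz
    have hγw := mul_le_mul_of_nonneg_right hγ hpos.le
    rw [← hz] at hwa
    rw [hwa, X3C.Inst.wt, X3C.Inst.wX, hwa']
    linarith
end

section
/- In the Exact-3-Set-Cover reduction instance (T, w), for every 1 ≤ i ≤ m and every κ ∈ {1,2,3,4} the weights satisfy w(a_{iκ}) ≥ 3·(w(u_{i3}) + w(u_{i2}) + w(u_{i1})) + W_{u_{i3}}. -/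
/-!
The key fact is that every coefficient `γ(i,j)` is at least `3`. Indeed
`u_{ij} ≺ u_{i,j+1} ≺ ⋯ ≺ u_{i3} ≺ X_i` (the last relation because the second entry of the key of
`X_i` is positive), so with `j ∈ {1,2,3}` there are at least `3 - j` elements strictly between
`u_{ij}` and `X_i`, and `X_i` itself is counted among the sets in `(u_{ij}, X_i]`; hence
`γ(i,j) ≥ j - 5 + (3 - j) + 5 = 3`. Since the coefficients are nonnegative, so are the weights
`w(u_j)` and `W_{u_j}`, by induction along the recursive definitions. The claim follows by
dropping `W_{u_{i1}}` and `W_{u_{i2}}` from `w(a_{iκ})` and bounding each coefficient by `3`.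
-/

open scoped Classical

namespace X3C.Inst

variable (I : Inst)

/-- The later elements `u_{i,j+1}, …, u_{i3}` of `X_i` are counted
(`j` is zero-based, so there are `2 - j` of them). -/
lemma two_sub_le_elemsBetween (i : Fin I.m) (j : Fin 3) :
    2 ≤ (j : ℕ) + I.elemsBetween i j := by
  have h := I.hord i
  have hb := I.hbound i
  have hmem : ∀ (κ : ℕ) (hκ : κ < I.n), I.x i j < κ → κ ≤ I.x i 2 →
      (⟨κ, hκ⟩ : Fin I.n) ∈ Finset.univ.filter
        (fun κ : Fin I.n => I.x i j < (κ : ℕ) ∧ keyLt (keyU κ) (I.keyX i)) := by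
    intro κ hκ h1 h2
    refine Finset.mem_filter.mpr ⟨Finset.mem_univ _, h1, ?_⟩
    simp only [keyLt, keyU, keyX]
    omega
  match j with
  | 0 =>
    have : 1 < I.elemsBetween i 0 := Finset.one_lt_card.mpr
      ⟨⟨I.x i 1, by omega⟩, hmem _ _ (by omega) (by omega),
        ⟨I.x i 2, hb⟩, hmem _ _ (by omega) le_rfl, by
          simp only [ne_eq, Fin.mk.injEq]; omega⟩
    omega
  | 1 =>
    have : 0 < I.elemsBetween i 1 := Finset.card_pos.mpr
      ⟨⟨I.x i 2, hb⟩, hmem _ _ (by omega) le_rfl⟩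
    simp; omega
  | 2 => simp

lemma three_le_gam (i : Fin I.m) (j : Fin 3) : 3 ≤ I.gam i j := by
  have h1 := I.one_le_setsBetween i j
  have h2 := I.two_sub_le_elemsBetween i j
  unfold gam
  omega

lemma gam_nonneg (i : Fin I.m) (j : Fin 3) : (0 : ℚ) ≤ I.gam i j := by
  have := I.three_le_gam i j
  exact_mod_cast (by omega : 0 ≤ I.gam i j)

lemma WuF_nonneg {f : ℕ → ℚ} (hf : ∀ j, 0 ≤ f j) (j : ℕ) : 0 ≤ I.WuF f j := by
  induction j using Nat.strong_induction_on with
  | _ j ih =>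
    unfold WuF
    rw [Nat.strongRecOn_eq]
    refine Finset.sum_nonneg fun ℓ _ => ?_
    have h1 : ∀ κ : Fin 3, 0 ≤ if _h : I.x ℓ κ < j then I.WuF f (I.x ℓ κ) else 0 := by
      intro κ
      split_ifs with h
      · exact ih _ h
      · exact le_rfl
    have h2 := Finset.sum_nonneg fun κ (_ : κ ∈ Finset.univ) => h1 κ
    have h3 : 0 ≤ ∑ κ : Fin 3, (I.gam ℓ κ : ℚ) * f (I.x ℓ κ) :=
      Finset.sum_nonneg fun κ _ => mul_nonneg (I.gam_nonneg ℓ κ) (hf _)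
    have h4 := hf (I.x ℓ 0)
    have h5 := hf (I.x ℓ 1)
    have h6 := hf (I.x ℓ 2)
    unfold WuF at h2
    dsimp only at h2 ⊢
    linarith

lemma wu_nonneg (j : ℕ) : 0 ≤ I.wu j := by
  induction j using Nat.strong_induction_on with
  | _ j ih =>
    unfold wu
    rw [Nat.strongRecOn_eq]
    split_ifs with hj
    · exact zero_le_one
    · have h : 0 ≤ (I.Tsize : ℚ) ^ 3 * (if _h : j - 1 < j then I.wu (j - 1) else 0) := by
        refine mul_nonneg (by positivity) ?_
        split_ifs with h
        · exact ih _ h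
        · exact le_rfl
      -- The first argument of the maximum is nonnegative, so the second one does not matter.
      have h' := h.trans (le_max_left _ (I.WuF (fun j' => if _h : j' < j then I.wu j' else 0) j))
      unfold wu at h'
      dsimp only at h' ⊢
      linarith

end X3C.Inst

/-- In the X3C reduction instance `(T,w)`, for every `i` and every `κ ∈ {1,2,3,4}` one has
`w(a_{iκ}) ≥ 3·(w(u_{i3}) + w(u_{i2}) + w(u_{i1})) + W_{u_{i3}}`
(all four `a`-leaves of `X̃_i` have the common weight `wa i`). -/
theorem statement9 (I : X3C.Inst) (i : Fin I.m) (κ : Fin 4) :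
    3 * (I.wu (I.x i 2) + I.wu (I.x i 1) + I.wu (I.x i 0)) + I.Wu (I.x i 2) ≤ I.wa i := by
  have hγ : ∀ j : Fin 3, 3 * I.wu (I.x i j) ≤ (I.gam i j : ℚ) * I.wu (I.x i j) := fun j =>
    mul_le_mul_of_nonneg_right (by exact_mod_cast I.three_le_gam i j) (I.wu_nonneg _)
  have h0 : 0 ≤ I.Wu (I.x i 0) := I.WuF_nonneg I.wu_nonneg _
  have h1 : 0 ≤ I.Wu (I.x i 1) := I.WuF_nonneg I.wu_nonneg _
  unfold X3C.Inst.wa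
  rw [Fin.sum_univ_three]
  linarith [hγ 0, hγ 1, hγ 2]
end

section
/- In the sequence Π no four consecutive entries all belong to 𝒳; i.e., there is no index i with π_i, π_{i+1}, π_{i+2}, π_{i+3} ∈ 𝒳. (At most three sets of 𝒳 appear consecutively in Π.) -/
/-!
If four sets were consecutive in `Π`, let `v` be the largest element of the last one, `d`. The key
`(v, 0, 0)` of `u_v` lies strictly below that of `d`, because the middle element of `d` is positive.
It lies strictly above the key of the first set `a` as soon as the maximum of `a` is smaller than
`v`, and then `u_v` would have to occur between `a` and `d` in the sorted list, where there are only
sets. Hence all four (distinct) sets have the same maximum, which thus lies in four members of `𝒳`,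
against the bound of three.
-/


open scoped Classical

namespace X3C

/-- Elements of `U ∪ 𝒳`: `inl j` is the element `u_j`, `inr i` is the set `X_i`. -/
abbrev Elt (I : Inst) := Sum (Fin I.n) (Fin I.m)

namespace Inst

variable (I : Inst)

/-- The key of an element of `U ∪ 𝒳`. -/
def keyE : Elt I → ℕ × ℕ × ℕ
  | .inl j => keyU (j : ℕ)
  | .inr i => I.keyX i

/-- The sequence `Π`: all elements of `U ∪ 𝒳` sorted increasingly w.r.t. `≺`. -/
noncomputable def PiList : List (Elt I) :=
  (((List.finRange I.n).map Sum.inl) ++ ((List.finRange I.m).map Sum.inr)).mergeSort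
    (fun e e' => decide (¬ keyLt (I.keyE e') (I.keyE e)))

/-- `Π` in decreasing order. -/
noncomputable def PiRev : List (Elt I) := I.PiList.reverse

end Inst

end X3C

namespace X3C.Inst

variable (I : Inst)

lemma PiList_perm : I.PiList.Perm
    (((List.finRange I.n).map Sum.inl) ++ ((List.finRange I.m).map Sum.inr)) :=
  List.mergeSort_perm _ _

lemma PiList_pairwise : I.PiList.Pairwise (fun e e' => ¬ keyLt (I.keyE e') (I.keyE e)) := by
  have h := List.pairwise_mergeSort
    (le := fun e e' : Elt I => decide (¬ keyLt (I.keyE e') (I.keyE e)))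
    (by
      intro a b c
      rw [decide_eq_true_iff, decide_eq_true_iff, decide_eq_true_iff]
      unfold keyLt
      omega)
    (by
      intro a b
      rw [Bool.or_eq_true, decide_eq_true_iff, decide_eq_true_iff]
      unfold keyLt
      omega)
    (((List.finRange I.n).map Sum.inl) ++ ((List.finRange I.m).map Sum.inr))
  exact h.imp fun hab => of_decide_eq_true hab

lemma PiList_nodup : I.PiList.Nodup := by
  rw [I.PiList_perm.nodup_iff, List.nodup_append]
  refine ⟨(List.nodup_finRange _).map Sum.inl_injective,
    (List.nodup_finRange _).map Sum.inr_injective, ?_⟩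
  simp

lemma inl_mem_PiList (j : Fin I.n) : Sum.inl j ∈ I.PiList := by
  rw [I.PiList_perm.mem_iff]
  simp

/-- Were the maximum of `d` larger than that of `a`, the element of `U` with that index would
lie in `Π` strictly between `a` and `d`. -/
lemma max_le_of_block {l₁ l₂ : List (Elt I)} {a b c d : Fin I.m}
    (h : I.PiList = l₁ ++ [Sum.inr a, Sum.inr b, Sum.inr c, Sum.inr d] ++ l₂) :
    I.x d 2 ≤ I.x a 2 := by
  by_contra! hlt
  have hp := I.PiList_pairwise
  have hm := I.inl_mem_PiList ⟨I.x d 2, I.hbound d⟩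
  rw [h] at hp hm
  simp only [List.pairwise_append, List.mem_append] at hp hm
  have hd := I.hord d
  rcases hm with (hm | hm) | hm
  · have := hp.1.2.2 _ hm (Sum.inr a) (by simp)
    exact this (Or.inl hlt)
  · simp at hm
  · have := hp.2.2 (Sum.inr d) (by simp) _ hm
    exact this (Or.inr ⟨rfl, Or.inl (show 0 < I.x d 1 by omega)⟩)

end X3C.Inst

/-- In the sequence `Π` no four consecutive entries all belong to `𝒳`. -/
theorem statement15 (I : X3C.Inst) :
    ¬ ∃ (l₁ l₂ : List (X3C.Elt I)) (a b c d : Fin I.m),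
        I.PiList = l₁ ++ [Sum.inr a, Sum.inr b, Sum.inr c, Sum.inr d] ++ l₂ := by
  rintro ⟨l₁, l₂, a, b, c, d, h⟩
  have hmax := I.max_le_of_block h
  have hp := I.PiList_pairwise
  have hn := I.PiList_nodup
  rw [h] at hp hn
  -- sortedness of the block itself and distinctness of its four sets
  have hp' := (List.pairwise_append.1 (List.pairwise_append.1 hp).1).2.1
  have hn' := (List.nodup_append.1 (List.nodup_append.1 hn).1).2.1
  simp [X3C.Inst.keyE, X3C.Inst.keyX, X3C.keyLt] at hp'
  simp at hn'
  have hsub : ({a, b, c, d} : Finset (Fin I.m)) ⊆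
      Finset.univ.filter (fun i : Fin I.m => ∃ j : Fin 3, I.x i j = I.x d 2) := by
    intro i hi
    simp only [Finset.mem_insert, Finset.mem_singleton] at hi
    simp only [Finset.mem_filter, Finset.mem_univ, true_and]
    refine ⟨2, ?_⟩
    rcases hi with rfl | rfl | rfl | rfl <;> omega
  have hcard : ({a, b, c, d} : Finset (Fin I.m)).card = 4 := by
    simp [Finset.card_insert_of_notMem, hn']
  have := (Finset.card_le_card hsub).trans (I.hmult _ (I.hbound d))
  omega
end

section
/- Let T be a star rooted at its center r, with leaves v_1,…,v_k ordered so that w(v_1) ≥ w(v_2) ≥ ⋯ ≥ w(v_k). Then the sequential search tree that queries v_1, v_2, …, v_k in this order is an optimal search tree for (T, w); in particular, in an optimal strategy the children of the root are queried in non-increasing order of weight. -/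
/-!
# Sequential search in a star

In any search tree for the star, a query to the center has an empty left subtree, and the right
subtree of a query to a leaf `a` contains no label other than `a`. Hence every query separates at
most one leaf of the star from the center, and reading these leaves off along the path to the
center gives an order `L` of the leaves of the star such that the cost of the tree is at least
`∑ i * w(L_i) + |L| * w(center)`, the cost of querying sequentially in the order `L`
(`exists_order_le_cost`). Moving the heaviest leaf to the front never increases this sequential
cost, so the non-increasing order minimizes it (`seqCost_le_of_perm`). The tree `starSeq k`
realizes the bound for the non-increasing order (`cost_seqTree`).
-/


open scoped Classical

/-- Ancestor relation of a star rooted at its center `0`: the center is an ancestor of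
everything, every leaf only of itself. -/
def starAnc {k : ℕ} (u v : Fin (k + 1)) : Prop := u = 0 ∨ u = v

/-- `D` is a search tree for the star with center `0` and leaves `1,…,k`. -/
def IsStarSearchTree {k : ℕ} (D : BT (Fin (k + 1))) : Prop :=
  (∀ v : Fin (k + 1), D.leafList.count v = 1) ∧ BT.SearchProp starAnc D

/-- The sequential search tree querying the leaves `1,…,k` of the star in this order. -/
def starSeq (k : ℕ) : BT (Fin (k + 1)) :=
  ((List.finRange k).map Fin.succ).foldr
    (fun v acc => BT.node v acc (BT.node v BT.nil BT.nil))
    (BT.node 0 BT.nil BT.nil)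

/-! ### Cost recursion for binary trees -/

theorem leafList_node {α : Type} (a : α) (l r : BT α) (h : ¬ (l = BT.nil ∧ r = BT.nil)) :
    (BT.node a l r).leafList = l.leafList ++ r.leafList := by
  cases l <;> cases r <;> simp_all [BT.leafList]

theorem leafDepths_node {α : Type} (a : α) (l r : BT α) (h : ¬ (l = BT.nil ∧ r = BT.nil)) :
    (BT.node a l r).leafDepths =
      (l.leafDepths ++ r.leafDepths).map (fun p => (p.1, p.2 + 1)) := by
  cases l <;> cases r <;> simp_all [BT.leafDepths]

theorem leafDepths_map_fst {α : Type} (D : BT α) : D.leafDepths.map Prod.fst = D.leafList := by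
  induction D with
  | nil => rfl
  | node a l r ihl ihr =>
    by_cases h : l = BT.nil ∧ r = BT.nil
    · obtain ⟨rfl, rfl⟩ := h
      rfl
    · rw [leafDepths_node a l r h, leafList_node a l r h, ← ihl, ← ihr]
      simp [Function.comp_def]

theorem leafList_subset_vals {α : Type} (D : BT α) : ∀ x ∈ D.leafList, x ∈ D.vals := by
  induction D with
  | nil => simp [BT.leafList]
  | node a l r ihl ihr =>
    by_cases h : l = BT.nil ∧ r = BT.nil
    · obtain ⟨rfl, rfl⟩ := h
      simp [BT.leafList, BT.vals]
    · intro x hx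
      rw [leafList_node a l r h, List.mem_append] at hx
      simp only [BT.vals, List.mem_cons, List.mem_append]
      exact Or.inr (hx.imp (ihl x) (ihr x))

/-- Hanging two subtrees below a common root pushes each of their leaves down by one level. -/
theorem cost_node {α : Type} (w : α → ℕ) (a : α) (l r : BT α)
    (h : ¬ (l = BT.nil ∧ r = BT.nil)) :
    BT.cost w (BT.node a l r) =
      (BT.cost w l + (l.leafList.map w).sum) + (BT.cost w r + (r.leafList.map w).sum) := by
  have key : ∀ P : List (α × ℕ),
      (P.map (fun p => (p.2 + 1) * w p.1)).sum
        = (P.map (fun p => p.2 * w p.1)).sum + ((P.map Prod.fst).map w).sum := by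
    intro P
    induction P with
    | nil => simp
    | cons p P ih =>
      simp only [List.map_cons, List.sum_cons, ih]
      ring
  rw [← leafDepths_map_fst l, ← leafDepths_map_fst r]
  unfold BT.cost
  rw [leafDepths_node a l r h, List.map_map, ← key, ← key, ← List.sum_append, ← List.map_append]
  rfl

/-! ### Sequential orders and the exchange argument -/

/-- The cost of querying leaves of a star sequentially, where `L` lists their weights in query
order and `c` is the weight of the center. Each query contributes the total weight of what has
not been separated before it. -/
def seqCost (c : ℕ) : List ℕ → ℕ
  | [] => 0
  | x :: xs => x + xs.sum + c + seqCost c xs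

/-- Moving an element that dominates everything before it to the front does not increase the
sequential cost. -/
theorem seqCost_move_front (c m : ℕ) (A B : List ℕ) (h : ∀ x ∈ A, x ≤ m) :
    seqCost c (m :: (A ++ B)) ≤ seqCost c (A ++ m :: B) := by
  induction A with
  | nil => simp
  | cons x A ih =>
    have h1 := ih (fun y hy => h y (List.mem_cons_of_mem _ hy))
    have h2 := h x List.mem_cons_self
    simp only [seqCost, List.cons_append, List.sum_cons, List.sum_append] at h1 ⊢
    omega

theorem seqCost_le_of_perm (c : ℕ) (M L : List ℕ) (hM : M.Pairwise (· ≥ ·)) (h : L.Perm M) :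
    seqCost c M ≤ seqCost c L := by
  induction M generalizing L with
  | nil => simp [seqCost]
  | cons m M ih =>
    rw [List.pairwise_cons] at hM
    obtain ⟨A, B, rfl⟩ := List.append_of_mem (h.mem_iff.2 List.mem_cons_self)
    have hp : (A ++ B).Perm M := (List.perm_middle.symm.trans h).cons_inv
    have h1 := ih _ hM.2 hp
    have h2 := seqCost_move_front c m A B
      (fun x hx => hM.1 x (hp.mem_iff.1 (List.mem_append_left _ hx)))
    have h3 := hp.sum_eq
    simp only [seqCost] at h2 ⊢
    omega

/-! ### The lower bound for arbitrary search trees -/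

/-- Every search tree on a subset of the star containing the center costs at least as much as
querying the other leaves sequentially in some order `L`. -/
theorem exists_order_le_cost {k : ℕ} (w : Fin (k + 1) → ℕ) (D : BT (Fin (k + 1)))
    (hs : BT.SearchProp starAnc D) (hnd : D.leafList.Nodup) (h0 : 0 ∈ D.leafList) :
    ∃ L : List (Fin (k + 1)), D.leafList.Perm (0 :: L) ∧
      seqCost (w 0) (L.map w) ≤ BT.cost w D := by
  induction D with
  | nil => simp [BT.leafList] at h0
  | node a l r ihl ihr =>
    by_cases h : l = BT.nil ∧ r = BT.nil
    · obtain ⟨rfl, rfl⟩ := h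
      simp only [BT.leafList, List.mem_singleton] at h0
      subst h0
      exact ⟨[], by simp [BT.leafList], by simp [seqCost]⟩
    · obtain ⟨hr, hl, hsl, hsr⟩ := hs
      rw [cost_node w a l r h]
      rw [leafList_node a l r h] at hnd h0 ⊢
      by_cases ha : a = 0
      · -- a query to the center is uninformative: everything lies in its subtree
        have hlnil : l = BT.nil := by
          cases l with
          | nil => rfl
          | node b _ _ => exact absurd (Or.inl ha) (hl b (by simp [BT.vals]))
        subst hlnil
        simp only [BT.leafList, List.nil_append] at hnd h0 ⊢
        obtain ⟨L, hL, hc⟩ := ihr hsr hnd h0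
        exact ⟨L, hL, by omega⟩
      · have hra : ∀ b ∈ r.leafList, b = a := fun b hb =>
          ((hr b (leafList_subset_vals r b hb)).resolve_left ha).symm
        have h0l : 0 ∈ l.leafList := by
          rcases List.mem_append.1 h0 with h0 | h0
          · exact h0
          · exact absurd (hra 0 h0).symm ha
        obtain ⟨L, hL, hc⟩ := ihl hsl hnd.of_append_left h0l
        have hsum := (hL.map w).sum_eq
        have hndr := hnd.of_append_right
        -- the right subtree has at most one leaf, as all its labels are `a`
        rcases hrl : r.leafList with _ | ⟨b, t⟩
        · exact ⟨L, by simpa using hL, by omega⟩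
        · rw [hrl] at hra hndr
          have hb : b = a := hra b List.mem_cons_self
          have ht : t = [] := by
            rcases t with _ | ⟨b', t⟩
            · rfl
            · have := hra b' (by simp)
              simp_all
          subst hb ht
          refine ⟨b :: L, ?_, ?_⟩
          · exact (hL.append_right [b]).trans
              ((List.perm_append_singleton b (0 :: L)).trans (List.Perm.swap 0 b L))
          · simp only [List.map_cons, List.sum_cons, seqCost, List.map_nil, List.sum_nil] at hsum ⊢
            omega

/-! ### The sequential search tree -/

/-- The sequential search tree querying the members of `L` in order, the last left child being
the leaf assigned to the center. -/
def seqTree {k : ℕ} (L : List (Fin (k + 1))) : BT (Fin (k + 1)) :=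
  L.foldr (fun v acc => BT.node v acc (BT.node v BT.nil BT.nil)) (BT.node 0 BT.nil BT.nil)

theorem leafList_seqTree {k : ℕ} (L : List (Fin (k + 1))) :
    (seqTree L).leafList = 0 :: L.reverse := by
  induction L with
  | nil => rfl
  | cons v L ih =>
    change (BT.node v (seqTree L) (BT.node v BT.nil BT.nil)).leafList = _
    rw [leafList_node _ _ _ (by simp), ih]
    simp [BT.leafList]

theorem cost_seqTree {k : ℕ} (w : Fin (k + 1) → ℕ) (L : List (Fin (k + 1))) :
    BT.cost w (seqTree L) = seqCost (w 0) (L.map w) := by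
  induction L with
  | nil => simp [seqTree, BT.cost, BT.leafDepths, seqCost]
  | cons v L ih =>
    change BT.cost w (BT.node v (seqTree L) (BT.node v BT.nil BT.nil)) = _
    rw [cost_node _ _ _ _ (by simp), ih, leafList_seqTree]
    simp [BT.leafList, BT.cost, BT.leafDepths, seqCost]
    omega

theorem vals_seqTree {k : ℕ} (L : List (Fin (k + 1))) :
    ∀ x ∈ (seqTree L).vals, x = 0 ∨ x ∈ L := by
  induction L with
  | nil => simp [seqTree, BT.vals]
  | cons v L ih =>
    intro x hx
    change x ∈ (BT.node v (seqTree L) (BT.node v BT.nil BT.nil)).vals at hx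
    simp only [BT.vals, List.mem_cons, List.mem_append, List.not_mem_nil, or_false] at hx ⊢
    rcases hx with hx | hx | hx
    · exact Or.inr (Or.inl hx)
    · exact (ih x hx).imp_right Or.inr
    · exact Or.inr (Or.inl hx)

theorem searchProp_seqTree {k : ℕ} (L : List (Fin (k + 1))) (hnd : (0 :: L).Nodup) :
    BT.SearchProp starAnc (seqTree L) := by
  induction L with
  | nil => simp [seqTree, BT.SearchProp, BT.vals]
  | cons v L ih =>
    simp only [List.nodup_cons, List.mem_cons, not_or] at hnd ih
    obtain ⟨⟨h0v, h0L⟩, hvL, hL⟩ := hnd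
    change BT.SearchProp starAnc (BT.node v (seqTree L) (BT.node v BT.nil BT.nil))
    refine ⟨by simp [BT.vals, starAnc], ?_, ih ⟨h0L, hL⟩, by simp [BT.SearchProp, BT.vals]⟩
    rintro b hb (hv | rfl)
    · exact h0v hv.symm
    · rcases vals_seqTree L _ hb with hv | hv
      · exact h0v hv.symm
      · exact hvL hv

/-- Let `T` be a star rooted at its center, with leaves `v_1,…,v_k` ordered so that
`w(v_1) ≥ w(v_2) ≥ ⋯ ≥ w(v_k)`.  Then the sequential search tree querying
`v_1, v_2, …, v_k` in this order is an optimal search tree for `(T,w)`. -/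
theorem statement16 (k : ℕ) (w : Fin (k + 1) → ℕ)
    (hsorted : ∀ i j : Fin k, i ≤ j → w j.succ ≤ w i.succ) :
    IsStarSearchTree (starSeq k) ∧
      ∀ D : BT (Fin (k + 1)), IsStarSearchTree D →
        BT.cost w (starSeq k) ≤ BT.cost w D := by
  have hperm : (0 :: (List.finRange k).map Fin.succ).Nodup := by
    rw [← List.finRange_succ]
    exact List.nodup_finRange _
  have hseq : starSeq k = seqTree ((List.finRange k).map Fin.succ) := rfl
  rw [hseq]
  refine ⟨⟨fun v => ?_, searchProp_seqTree _ hperm⟩, fun D hD => ?_⟩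
  · rw [leafList_seqTree, ((List.reverse_perm _).cons 0).count_eq, ← List.finRange_succ]
    exact List.count_eq_one_of_mem (List.nodup_finRange _) (List.mem_finRange v)
  · have hnd : D.leafList.Nodup := List.nodup_iff_count_le_one.2 fun v => (hD.1 v).le
    have hmem : ∀ v, v ∈ D.leafList := fun v =>
      List.count_pos_iff.1 (by rw [hD.1 v]; exact one_pos)
    obtain ⟨L, hL, hc⟩ := exists_order_le_cost w D hD.2 hnd (hmem 0)
    have hp : D.leafList.Perm (List.finRange (k + 1)) :=
      (List.perm_ext_iff_of_nodup hnd (List.nodup_finRange _)).2 fun v => by simp [hmem v]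
    rw [List.finRange_succ] at hp
    have hLp : L.Perm ((List.finRange k).map Fin.succ) := (hL.symm.trans hp).cons_inv
    rw [cost_seqTree]
    refine (seqCost_le_of_perm _ _ _ ?_ (hLp.map w)).trans hc
    rw [List.pairwise_map, List.pairwise_map]
    exact (List.pairwise_lt_finRange k).imp fun hij => hsorted _ _ hij.le
end
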